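/- arXiv:1803.01306 — 3 statements merged into one kernel-verified Lean document; each statement's English description precedes it below -/
import Mathlib

section
/- Let c, d ∈ ℝ with c² + d² ≠ 0, and let f : ℝ → ℝ be a twice continuously differentiable function satisfying (f′)² = (d−c)f² + c and f″ = (d−c)f on all of ℝ. Then f has no zero if and only if either c < 0, or else c = 0, d > 0, and there exists a constant C ≠ 0 such that f(u) = C·e^{√d·u} for all u, or f(u) = C·e^{−√d·u} for all u. -/
open Real

lemma aux_exp (g : ℝ → ℝ) (a : ℝ) (h : ∀ u, HasDerivAt g (a * g u) u) (u : ℝ) :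
    g u = g 0 * Real.exp (a * u) := by
  have hd : ∀ x, HasDerivAt (fun u => g u * Real.exp (-(a * u))) 0 x := by
    intro x
    have h1 : HasDerivAt (fun u : ℝ => -(a * u)) (-(a * 1)) x :=
      ((hasDerivAt_id x).const_mul a).neg
    have h2 := (h x).mul h1.exp
    refine h2.congr_deriv ?_
    ring
  have hc := is_const_of_deriv_eq_zero (fun x => (hd x).differentiableAt)
    (fun x => (hd x).deriv) u 0
  simp only [mul_zero, neg_zero, Real.exp_zero, mul_one] at hc
  rw [← hc, mul_assoc, ← Real.exp_add]
  simp

lemma aux_sign (g : ℝ → ℝ) (hg : Continuous g) (h : ∀ u, g u ≠ 0) :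
    (∀ u, 0 < g u) ∨ (∀ u, g u < 0) := by
  by_contra hh
  push Not at hh
  obtain ⟨⟨a, ha⟩, b, hb⟩ := hh
  obtain ⟨x, hx⟩ := mem_range_of_exists_le_of_exists_ge hg ⟨a, ha⟩ ⟨b, hb⟩
  exact h x hx

lemma aux_lin (g g' : ℝ → ℝ) (hg : ∀ u, HasDerivAt g (g' u) u) (s : ℝ) (hs : 0 < s)
    (h : ∀ u, s ≤ g' u) : ∃ u, g u = 0 := by
  have hm : Monotone (fun u => g u - s * u) := by
    have hd : ∀ x, HasDerivAt (fun u => g u - s * u) (g' x - s * 1) x := fun x =>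
      (hg x).sub ((hasDerivAt_id x).const_mul s)
    apply monotone_of_deriv_nonneg (fun x => (hd x).differentiableAt)
    intro x
    rw [(hd x).deriv]
    linarith [h x]
  have hc : Continuous g := continuous_iff_continuousAt.2 fun x => (hg x).continuousAt
  have hk : s * (|g 0| / s) = |g 0| := by field_simp
  have hp : 0 ≤ |g 0| / s := by positivity
  obtain ⟨x, hx⟩ := mem_range_of_exists_le_of_exists_ge (c := (0 : ℝ)) hc
    ⟨-(|g 0| / s), by
      have := hm (show -(|g 0| / s) ≤ 0 by linarith)
      simp only [mul_neg, hk] at this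
      linarith [le_abs_self (g 0)]⟩
    ⟨|g 0| / s, by
      have := hm hp
      simp only [hk] at this
      linarith [neg_abs_le (g 0)]⟩
  exact ⟨x, hx⟩

lemma aux_osc (g g' : ℝ → ℝ) (w : ℝ) (hw : 0 < w) (hg : ∀ u, HasDerivAt g (g' u) u)
    (hg' : ∀ u, HasDerivAt g' (-(w ^ 2) * g u) u) : ∃ u, g u = 0 := by
  have hd : ∀ x, HasDerivAt
      (fun u => w * (g u * Real.cos (w * u)) - g' u * Real.sin (w * u)) 0 x := by
    intro x
    have h1 : HasDerivAt (fun u : ℝ => w * u) (w * 1) x := (hasDerivAt_id x).const_mul w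
    have h2 := (((hg x).mul h1.cos).const_mul w).sub ((hg' x).mul h1.sin)
    refine h2.congr_deriv ?_
    ring
  have hc := is_const_of_deriv_eq_zero (fun x => (hd x).differentiableAt)
    (fun x => (hd x).deriv) (π / w) 0
  have hk : w * (π / w) = π := by field_simp
  simp only [hk, Real.cos_pi, Real.sin_pi, mul_zero, Real.cos_zero, Real.sin_zero, mul_one,
    sub_zero] at hc
  have hc2 : g (π / w) = - g 0 := by
    have := mul_left_cancel₀ hw.ne' hc
    linarith
  by_contra hh
  push Not at hh
  have hcont : Continuous g := continuous_iff_continuousAt.2 fun x => (hg x).continuousAt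
  rcases aux_sign g hcont hh with h | h <;> linarith [h 0, h (π / w)]

/-- A C² solution f on ℝ of (f′)² = (d−c)f² + c, f″ = (d−c)f,
with c² + d² ≠ 0, has no zero if and only if either c < 0, or c = 0, d > 0 and
f(u) = C·e^{√d·u} or f(u) = C·e^{−√d·u} for some constant C ≠ 0. -/
theorem ode_solution_has_no_zero_iff
    (c d : ℝ) (hcd : c ^ 2 + d ^ 2 ≠ 0) (f : ℝ → ℝ)
    (hf : ContDiff ℝ 2 f)
    (hode1 : ∀ u, (deriv f u) ^ 2 = (d - c) * (f u) ^ 2 + c)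
    (hode2 : ∀ u, deriv (deriv f) u = (d - c) * f u) :
    (∀ u, f u ≠ 0) ↔
      (c < 0 ∨ (c = 0 ∧ 0 < d ∧ ∃ C : ℝ, C ≠ 0 ∧
        ((∀ u, f u = C * Real.exp (Real.sqrt d * u)) ∨
         (∀ u, f u = C * Real.exp (-(Real.sqrt d * u)))))) := by
  have hD : ∀ u, HasDerivAt f (deriv f u) u := fun u =>
    (hf.differentiable (by norm_num) u).hasDerivAt
  have hf1 : ContDiff ℝ 1 (deriv f) := by
    have : ContDiff ℝ (1 + 1) f := by
      rw [one_add_one_eq_two]; exact hf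
    exact (contDiff_succ_iff_deriv.1 this).2.2
  have hD2 : ∀ u, HasDerivAt (deriv f) ((d - c) * f u) u := fun u => by
    rw [← hode2]
    exact (hf1.differentiable (by norm_num) u).hasDerivAt
  constructor
  · intro hz
    by_cases hc : c < 0
    · exact Or.inl hc
    right
    push Not at hc
    have hk : 0 ≤ d - c := by
      by_contra hk
      push Not at hk
      obtain ⟨u, hu⟩ := aux_osc f (deriv f) (Real.sqrt (c - d)) (Real.sqrt_pos.2 (by linarith)) hD
        (fun u => by
          rw [Real.sq_sqrt (by linarith)]
          convert hD2 u using 1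
          ring)
      exact hz u hu
    have hc0 : c = 0 := by
      by_contra hne
      have hcp : 0 < c := lt_of_le_of_ne hc (Ne.symm hne)
      have hge : ∀ u, c ≤ (deriv f u) ^ 2 := fun u => by
        rw [hode1]
        nlinarith [mul_nonneg hk (sq_nonneg (f u))]
      have hne' : ∀ u, deriv f u ≠ 0 := fun u h => by
        have := hge u
        rw [h] at this
        norm_num at this
        linarith
      have habs : ∀ u, Real.sqrt c ≤ |deriv f u| := fun u => Real.sqrt_le_iff.2
        ⟨abs_nonneg _, by rw [sq_abs]; exact hge u⟩
      rcases aux_sign (deriv f) hf1.continuous hne' with h | h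
      · obtain ⟨u, hu⟩ := aux_lin f (deriv f) hD (Real.sqrt c) (Real.sqrt_pos.2 hcp)
          (fun u => by have := habs u; rwa [abs_of_pos (h u)] at this)
        exact hz u hu
      · obtain ⟨u, hu⟩ := aux_lin (fun u => - f u) (fun u => - deriv f u) (fun u => (hD u).neg)
          (Real.sqrt c) (Real.sqrt_pos.2 hcp)
          (fun u => by have := habs u; rwa [abs_of_neg (h u)] at this)
        exact hz u (by simpa using hu)
    subst hc0
    have hd0 : d ≠ 0 := by
      rintro rfl
      norm_num at hcd
    have hdp : 0 < d := lt_of_le_of_ne (by linarith) (Ne.symm hd0)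
    refine ⟨rfl, hdp, f 0, hz 0, ?_⟩
    obtain ⟨s, hs⟩ : ∃ s, s = Real.sqrt d := ⟨_, rfl⟩
    have hsp : 0 < s := hs ▸ Real.sqrt_pos.2 hdp
    have hs2 : s ^ 2 = d := hs ▸ Real.sq_sqrt hdp.le
    rw [← hs]
    have hE := aux_exp (fun u => deriv f u - s * f u) (-s) (fun u => by
      refine ((hD2 u).sub ((hD u).const_mul s)).congr_deriv ?_
      rw [← hs2]; ring)
    have hF := aux_exp (fun u => deriv f u + s * f u) s (fun u => by
      refine ((hD2 u).add ((hD u).const_mul s)).congr_deriv ?_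
      rw [← hs2]; ring)
    have h0 : (deriv f 0 - s * f 0) * (deriv f 0 + s * f 0) = 0 := by
      have := hode1 0
      rw [← hs2] at this
      linarith
    rcases mul_eq_zero.1 h0 with h | h
    · left
      intro u
      have e := hE u
      have e2 := hF u
      rw [h] at e
      have h' : deriv f 0 = s * f 0 := by linarith
      rw [h'] at e2
      apply mul_left_cancel₀ hsp.ne'
      linarith
    · right
      intro u
      have e := hE u
      have e2 := hF u
      rw [h] at e2
      have h' : deriv f 0 = - (s * f 0) := by linarith
      rw [h', neg_mul] at e
      apply mul_left_cancel₀ hsp.ne'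
      linarith
  · rintro (hc | ⟨-, -, C, hC, h | h⟩) u hu
    · have := hode1 u
      rw [hu] at this
      nlinarith [sq_nonneg (deriv f u)]
    · rw [h] at hu
      exact mul_ne_zero hC (Real.exp_ne_zero _) hu
    · rw [h] at hu
      exact mul_ne_zero hC (Real.exp_ne_zero _) hu
end

section
/- Let c, d ∈ ℝ with c² + d² ≠ 0 and d ≥ 0, and let f : ℝ → ℝ be a twice continuously differentiable function satisfying (f′)² = (d−c)f² + c and f″ = (d−c)f on all of ℝ. If f attains a positive value somewhere (there exists u₁ with f(u₁) > 0), then f attains the value 1: there exists u₀ ∈ ℝ with f(u₀) = 1. -/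
open Real

lemma aux_const (F : ℝ → ℝ) (h : ∀ u, HasDerivAt F 0 u) (u : ℝ) : F u = F 0 :=
  is_const_of_deriv_eq_zero (fun x => (h x).differentiableAt) (fun x => (h x).deriv) u 0

lemma aux_ivt (f : ℝ → ℝ) (hf : Continuous f) (y a b : ℝ) (ha : f a ≤ y) (hb : y ≤ f b) :
    ∃ u, f u = y :=
  mem_range_of_exists_le_of_exists_ge hf ⟨a, ha⟩ ⟨b, hb⟩

/-- Let c² + d² ≠ 0 with d ≥ 0, and let f be a C² solution on ℝ of
(f′)² = (d−c)f² + c, f″ = (d−c)f. If f attains a positive value somewhere, then f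
attains the value 1 somewhere. -/
theorem ode_solution_attains_one
    (c d : ℝ) (hcd : c ^ 2 + d ^ 2 ≠ 0) (hd : 0 ≤ d) (f : ℝ → ℝ)
    (hf : ContDiff ℝ 2 f)
    (hode1 : ∀ u, (deriv f u) ^ 2 = (d - c) * (f u) ^ 2 + c)
    (hode2 : ∀ u, deriv (deriv f) u = (d - c) * f u)
    (hpos : ∃ u₁ : ℝ, 0 < f u₁) :
    ∃ u₀ : ℝ, f u₀ = 1 := by
  obtain ⟨u₁, hu₁⟩ := hpos
  have hd1 : ∀ u, HasDerivAt f (deriv f u) u := fun u =>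
    ((hf.differentiable (by norm_num)) u).hasDerivAt
  have hd2 : ∀ u, HasDerivAt (deriv f) ((d - c) * f u) u := fun u => by
    rw [← hode2 u]
    have h1 : ContDiff ℝ 1 (deriv f) := by
      have : ContDiff ℝ (1 + 1) f := by norm_num; exact hf
      exact (contDiff_succ_iff_deriv.1 this).2.2
    exact ((h1.differentiable (by norm_num)) u).hasDerivAt
  have hcf : Continuous f := hf.continuous
  have hcf' : Continuous (deriv f) :=
    continuous_iff_continuousAt.2 fun u => (hd2 u).continuousAt
  rcases lt_trichotomy (d - c) 0 with hk | hk | hk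
  · -- trigonometric case
    obtain ⟨w, hw, hwk⟩ : ∃ w : ℝ, 0 < w ∧ d - c = - w ^ 2 :=
      ⟨√(-(d - c)), Real.sqrt_pos.2 (by linarith), by rw [Real.sq_sqrt (by linarith)]; ring⟩
    have hlin : ∀ u, HasDerivAt (fun u : ℝ => w * u) w u := fun u => by
      simpa using (hasDerivAt_id u).const_mul w
    have hP := aux_const (fun u => f u * cos (w * u) - deriv f u / w * sin (w * u)) (fun u => by
      have := ((hd1 u).mul (hlin u).cos).sub (((hd2 u).div_const w).mul (hlin u).sin)
      refine HasDerivAt.congr_deriv this ?_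
      rw [hwk]; field_simp; ring)
    have hQ := aux_const (fun u => f u * sin (w * u) + deriv f u / w * cos (w * u)) (fun u => by
      have := ((hd1 u).mul (hlin u).sin).add (((hd2 u).div_const w).mul (hlin u).cos)
      refine HasDerivAt.congr_deriv this ?_
      rw [hwk]; field_simp; ring)
    simp only [mul_zero, cos_zero, sin_zero, mul_one, sub_zero, zero_add] at hP hQ
    have hform : ∀ u, f u = f 0 * cos (w * u) + deriv f 0 / w * sin (w * u) := fun u => by
      rw [← hP u, ← hQ u]
      linear_combination (- f u) * sin_sq_add_cos_sq (w * u)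
    have hanti : ∀ u, f (u + π / w) = - f u := fun u => by
      rw [hform (u + π / w), hform u]
      have : w * (u + π / w) = w * u + π := by field_simp
      rw [this, cos_add_pi, sin_add_pi]; ring
    have hper : f 0 = f (0 + π / w + π / w) := by rw [hanti, hanti]; ring
    have hpw : 0 < π / w := by positivity
    obtain ⟨z, -, hz⟩ := exists_deriv_eq_zero (f := f) (a := 0) (b := 0 + π / w + π / w)
      (by linarith) hcf.continuousOn hper
    have h1 := hode1 z
    rw [hz] at h1
    have h2 : 1 ≤ (f z) ^ 2 := by
      by_contra! h
      nlinarith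
    have h3 := hanti z
    rcases le_total 0 (f z) with h | h
    · exact aux_ivt f hcf 1 (z + π / w) z (by linarith) (by nlinarith)
    · exact aux_ivt f hcf 1 z (z + π / w) (by linarith) (by nlinarith)
  · -- affine case
    have hc : c ≠ 0 := by
      rintro rfl
      apply hcd
      have : d = 0 := by linarith
      simp [this]
    have hb := aux_const (deriv f) (fun u => by simpa [hk] using hd2 u)
    have hA := aux_const (fun u => f u - deriv f 0 * u) (fun u => by
      have := (hd1 u).sub ((hasDerivAt_id u).const_mul (deriv f 0))
      refine HasDerivAt.congr_deriv this ?_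
      rw [hb u]; ring)
    have hb0 : deriv f 0 ≠ 0 := by
      intro h
      have := hode1 0
      rw [h, hk] at this
      apply hc; linarith
    refine ⟨(1 - f 0) / deriv f 0, ?_⟩
    have := hA ((1 - f 0) / deriv f 0)
    simp only [mul_div_cancel₀ _ hb0, mul_zero] at this
    have h2 : deriv f 0 * ((1 - f 0) / deriv f 0) = 1 - f 0 := by field_simp
    linarith
  · -- hyperbolic case
    obtain ⟨s, hs, hsk⟩ : ∃ s : ℝ, 0 < s ∧ d - c = s ^ 2 :=
      ⟨√(d - c), Real.sqrt_pos.2 hk, by rw [Real.sq_sqrt hk.le]⟩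
    have hlin : ∀ u, HasDerivAt (fun u : ℝ => s * u) s u := fun u => by
      simpa using (hasDerivAt_id u).const_mul s
    have hG := aux_const (fun u => (deriv f u + s * f u) * exp (-(s * u))) (fun u => by
      have := ((hd2 u).add ((hd1 u).const_mul s)).mul (hlin u).neg.exp
      refine HasDerivAt.congr_deriv this ?_
      try simp only [Pi.add_apply, Pi.neg_apply]
      rw [hsk]; ring)
    have hH := aux_const (fun u => (deriv f u - s * f u) * exp (s * u)) (fun u => by
      have := ((hd2 u).sub ((hd1 u).const_mul s)).mul (hlin u).exp
      refine HasDerivAt.congr_deriv this ?_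
      try simp only [Pi.sub_apply]
      rw [hsk]; ring)
    simp only [mul_zero, neg_zero, exp_zero, mul_one] at hG hH
    generalize deriv f 0 + s * f 0 = g at hG
    generalize deriv f 0 - s * f 0 = h at hH
    have hform : ∀ u, 2 * s * f u = g * exp (s * u) - h * exp (-(s * u)) := fun u => by
      have e : exp (-(s * u)) * exp (s * u) = 1 := by rw [← exp_add]; simp
      rw [← hG u, ← hH u]
      linear_combination (-2 * s * f u) * e
    have hbig : ∃ u, 1 ≤ f u := by
      rcases lt_or_ge 0 g with hg | hg
      · refine ⟨(|h| + 2 * s) / (g * s), ?_⟩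
        set u := (|h| + 2 * s) / (g * s) with hu
        have hu0 : 0 ≤ s * u := by positivity
        have hgu : g * (s * u) = |h| + 2 * s := by rw [hu]; field_simp
        have h1 := add_one_le_exp (s * u)
        have h2 : exp (-(s * u)) ≤ 1 := exp_le_one_iff.2 (by linarith)
        have h3 : h * exp (-(s * u)) ≤ |h| := by
          nlinarith [le_abs_self h, abs_nonneg h, exp_pos (-(s * u))]
        have h4 := hform u
        nlinarith
      · have hh : h < 0 := by
          by_contra! hh
          have := hform u₁
          have e1 := exp_pos (s * u₁)
          have e2 := exp_pos (-(s * u₁))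
          nlinarith [mul_pos hs hu₁, mul_nonneg hh e2.le, mul_nonneg (neg_nonneg.2 hg) e1.le]
        obtain ⟨m, rfl⟩ : ∃ m, h = -m := ⟨-h, by ring⟩
        have hm : 0 < m := by linarith
        refine ⟨-((|g| + 2 * s) / (m * s)), ?_⟩
        set v := (|g| + 2 * s) / (m * s) with hv
        have hv0 : 0 ≤ s * v := by positivity
        have hmv : m * (s * v) = |g| + 2 * s := by rw [hv]; field_simp
        have h1 := add_one_le_exp (s * v)
        have h2 : exp (-(s * v)) ≤ 1 := exp_le_one_iff.2 (by linarith)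
        have h3 : -|g| ≤ g * exp (-(s * v)) := by
          nlinarith [neg_abs_le g, abs_nonneg g, exp_pos (-(s * v))]
        have h4 := hform (-v)
        rw [mul_neg, neg_neg] at h4
        nlinarith
    obtain ⟨ub, hub⟩ := hbig
    by_contra! hne
    have hgt : ∀ u, 1 < f u := by
      intro u
      by_contra! hle
      obtain ⟨x, hx⟩ := aux_ivt f hcf 1 u ub hle hub
      exact hne x hx
    have hmono : Monotone (fun u => deriv f u - s ^ 2 * u) := by
      refine monotone_of_hasDerivAt_nonneg (f' := fun u => s ^ 2 * f u - s ^ 2 * 1) (fun u => ?_) ?_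
      · rw [← hsk]
        exact (hd2 u).sub ((hasDerivAt_id u).const_mul (d - c))
      · intro u
        have := hgt u
        simp only [Pi.zero_apply]
        nlinarith [sq_nonneg s]
    obtain ⟨z, hz⟩ : ∃ z, deriv f z = 0 := by
      have e : s ^ 2 * (|deriv f 0| / s ^ 2) = |deriv f 0| := by field_simp
      have hT : 0 ≤ |deriv f 0| / s ^ 2 := by positivity
      generalize |deriv f 0| / s ^ 2 = T at e hT
      have m1 := hmono (show -T ≤ 0 by linarith)
      have m2 := hmono hT
      simp only at m1 m2
      refine aux_ivt _ hcf' 0 (-T) T ?_ ?_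
      · nlinarith [le_abs_self (deriv f 0)]
      · nlinarith [neg_abs_le (deriv f 0)]
    have h1 := hode1 z
    rw [hz] at h1
    have h2 := hgt z
    have h3 : 1 < (f z) ^ 2 := by nlinarith
    nlinarith
end

section
/- Let Σ ⊆ ℝ² be a connected open set, ρ : Σ → (0,∞) a smooth solution of the PDE system, and X, N : Σ → ℝ³ smooth maps satisfying the Gauss–Weingarten system and the conformal frame relations. Define the vector fields v₁ := ((ρ_u² − ρ·ρ_uu)/ρ²)·X_u − (ρ_u·ρ_v/ρ²)·X_v + (ρ_u/ρ)·N and v₂ := −(ρ_u·ρ_v/ρ²)·X_u + ((ρ_v² − ρ·ρ_vv)/ρ²)·X_v − (ρ_v/ρ)·N, and set m := ρ^{−2}·(X_u × X_uu) and n := ρ^{−2}·(X_v × X_vv), where × is the Lorentzian cross product. Then: (i) v₁ and v₂ are constant on Σ (all their partial derivatives vanish); (ii) ⟨m, v₁⟩ = 0 and ⟨m_v, v₁⟩ = 0 at every point of Σ, and likewise ⟨n, v₂⟩ = 0 and ⟨n_u, v₂⟩ = 0; (iii) if ρ_u(p) ≠ 0 for some p ∈ Σ then v₁ ≠ 0,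 and if ρ_v(p) ≠ 0 for some p ∈ Σ then v₂ ≠ 0. -/
open Real Filter

/-- Partial derivative in the first variable. -/
noncomputable def pu {E : Type*} [NormedAddCommGroup E] [NormedSpace ℝ E]
    (f : ℝ → ℝ → E) (u v : ℝ) : E := deriv (fun x => f x v) u

/-- Partial derivative in the second variable. -/
noncomputable def pv {E : Type*} [NormedAddCommGroup E] [NormedSpace ℝ E]
    (f : ℝ → ℝ → E) (u v : ℝ) : E := deriv (fun y => f u y) v

/-- Minkowski inner product on ℝ³ = ℝ^{2,1}, with coordinates (x₁, x₂, x₀). -/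
def mink (x y : ℝ × ℝ × ℝ) : ℝ := x.1 * y.1 + x.2.1 * y.2.1 - x.2.2 * y.2.2

/-- Determinant of the 3×3 matrix with rows a, b, c. -/
def det3 (a b c : ℝ × ℝ × ℝ) : ℝ :=
  a.1 * (b.2.1 * c.2.2 - b.2.2 * c.2.1)
    - a.2.1 * (b.1 * c.2.2 - b.2.2 * c.1)
    + a.2.2 * (b.1 * c.2.1 - b.2.1 * c.1)

/-- Lorentzian cross product on ℝ^{2,1}: ⟨a × b, c⟩ = det(a,b,c) for all c. -/
def lcross (a b : ℝ × ℝ × ℝ) : ℝ × ℝ × ℝ :=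
  (a.2.1 * b.2.2 - a.2.2 * b.2.1,
   a.2.2 * b.1 - a.1 * b.2.2,
   -(a.1 * b.2.1 - a.2.1 * b.1))

section helpers
variable {E : Type*} [NormedAddCommGroup E] [NormedSpace ℝ E]

/-- Smoothness of a curried map on a set. -/
def Sm (S : Set (ℝ × ℝ)) (f : ℝ → ℝ → E) : Prop :=
  ContDiffOn ℝ (⊤ : ℕ∞) (fun p : ℝ × ℝ => f p.1 p.2) S

theorem Sm.fd {S : Set (ℝ × ℝ)} (hS : IsOpen S) {f : ℝ → ℝ → E} (h : Sm S f) {p : ℝ × ℝ}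
    (hp : p ∈ S) :
    HasFDerivAt (fun p : ℝ × ℝ => f p.1 p.2)
      (fderiv ℝ (fun p : ℝ × ℝ => f p.1 p.2) p) p :=
  ((h.contDiffAt (hS.mem_nhds hp)).differentiableAt (by simp)).hasFDerivAt

theorem Sm.du' {S : Set (ℝ × ℝ)} (hS : IsOpen S) {f : ℝ → ℝ → E} (h : Sm S f) {p : ℝ × ℝ}
    (hp : p ∈ S) :
    HasDerivAt (fun x => f x p.2) (fderiv ℝ (fun p : ℝ × ℝ => f p.1 p.2) p (1, 0)) p.1 :=
  HasFDerivAt.comp_hasDerivAt (f := fun x : ℝ => (x, p.2)) p.1 (h.fd hS hp)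
    ((hasDerivAt_id p.1).prodMk (hasDerivAt_const p.1 p.2))

theorem Sm.dv' {S : Set (ℝ × ℝ)} (hS : IsOpen S) {f : ℝ → ℝ → E} (h : Sm S f) {p : ℝ × ℝ}
    (hp : p ∈ S) :
    HasDerivAt (fun y => f p.1 y) (fderiv ℝ (fun p : ℝ × ℝ => f p.1 p.2) p (0, 1)) p.2 :=
  HasFDerivAt.comp_hasDerivAt (f := fun y : ℝ => (p.1, y)) p.2 (h.fd hS hp)
    ((hasDerivAt_const p.2 p.1).prodMk (hasDerivAt_id p.2))

theorem Sm.pu_eq {S : Set (ℝ × ℝ)} (hS : IsOpen S) {f : ℝ → ℝ → E} (h : Sm S f) {p : ℝ × ℝ}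
    (hp : p ∈ S) : pu f p.1 p.2 = fderiv ℝ (fun p : ℝ × ℝ => f p.1 p.2) p (1, 0) :=
  (h.du' hS hp).deriv

theorem Sm.pv_eq {S : Set (ℝ × ℝ)} (hS : IsOpen S) {f : ℝ → ℝ → E} (h : Sm S f) {p : ℝ × ℝ}
    (hp : p ∈ S) : pv f p.1 p.2 = fderiv ℝ (fun p : ℝ × ℝ => f p.1 p.2) p (0, 1) :=
  (h.dv' hS hp).deriv

theorem Sm.du {S : Set (ℝ × ℝ)} (hS : IsOpen S) {f : ℝ → ℝ → E} (h : Sm S f) {p : ℝ × ℝ}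
    (hp : p ∈ S) : HasDerivAt (fun x => f x p.2) (pu f p.1 p.2) p.1 := by
  rw [h.pu_eq hS hp]; exact h.du' hS hp

theorem Sm.dv {S : Set (ℝ × ℝ)} (hS : IsOpen S) {f : ℝ → ℝ → E} (h : Sm S f) {p : ℝ × ℝ}
    (hp : p ∈ S) : HasDerivAt (fun y => f p.1 y) (pv f p.1 p.2) p.2 := by
  rw [h.pv_eq hS hp]; exact h.dv' hS hp

theorem Sm.fds {S : Set (ℝ × ℝ)} (hS : IsOpen S) {f : ℝ → ℝ → E} (h : Sm S f) :
    ContDiffOn ℝ (⊤ : ℕ∞) (fderiv ℝ (fun p : ℝ × ℝ => f p.1 p.2)) S :=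
  ContDiffOn.fderiv_of_isOpen h hS (by simp)

theorem Sm.pu {S : Set (ℝ × ℝ)} (hS : IsOpen S) {f : ℝ → ℝ → E} (h : Sm S f) :
    Sm S (pu f) :=
  ((h.fds hS).clm_apply contDiffOn_const).congr (fun _ hp => h.pu_eq hS hp)

theorem Sm.pv {S : Set (ℝ × ℝ)} (hS : IsOpen S) {f : ℝ → ℝ → E} (h : Sm S f) :
    Sm S (pv f) :=
  ((h.fds hS).clm_apply contDiffOn_const).congr (fun _ hp => h.pv_eq hS hp)

theorem nhd_u {S : Set (ℝ × ℝ)} (hS : IsOpen S) {p : ℝ × ℝ} (hp : p ∈ S) :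
    ∀ᶠ x in nhds p.1, (x, p.2) ∈ S :=
  (ContinuousAt.eventually_mem (f := fun x : ℝ => (x, p.2)) (by fun_prop) (hS.mem_nhds hp))

theorem nhd_v {S : Set (ℝ × ℝ)} (hS : IsOpen S) {p : ℝ × ℝ} (hp : p ∈ S) :
    ∀ᶠ y in nhds p.2, (p.1, y) ∈ S :=
  (ContinuousAt.eventually_mem (f := fun y : ℝ => (p.1, y)) (by fun_prop) (hS.mem_nhds hp))

theorem pu_congr {S : Set (ℝ × ℝ)} (hS : IsOpen S) {f g : ℝ → ℝ → E}
    (h : ∀ p ∈ S, f p.1 p.2 = g p.1 p.2) {p : ℝ × ℝ} (hp : p ∈ S) :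
    pu f p.1 p.2 = pu g p.1 p.2 := by
  apply Filter.EventuallyEq.deriv_eq
  filter_upwards [nhd_u hS hp] with x hx using h _ hx

theorem pv_congr {S : Set (ℝ × ℝ)} (hS : IsOpen S) {f g : ℝ → ℝ → E}
    (h : ∀ p ∈ S, f p.1 p.2 = g p.1 p.2) {p : ℝ × ℝ} (hp : p ∈ S) :
    pv f p.1 p.2 = pv g p.1 p.2 := by
  apply Filter.EventuallyEq.deriv_eq
  filter_upwards [nhd_v hS hp] with x hx using h _ hx

theorem Sm.comm {S : Set (ℝ × ℝ)} (hS : IsOpen S) {f : ℝ → ℝ → E} (h : Sm S f) {p : ℝ × ℝ}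
    (hp : p ∈ S) : _root_.pu (_root_.pv f) p.1 p.2 = _root_.pv (_root_.pu f) p.1 p.2 := by
  have hd : HasFDerivAt (fderiv ℝ (fun p : ℝ × ℝ => f p.1 p.2))
      (fderiv ℝ (fderiv ℝ (fun p : ℝ × ℝ => f p.1 p.2)) p) p :=
    (((h.fds hS).contDiffAt (hS.mem_nhds hp)).differentiableAt (by simp)).hasFDerivAt
  have hsym : IsSymmSndFDerivAt ℝ (fun p : ℝ × ℝ => f p.1 p.2) p :=
    (h.contDiffAt (hS.mem_nhds hp)).isSymmSndFDerivAt (by simpa using (by exact_mod_cast le_top : ((2 : ℕ∞) : WithTop ℕ∞) ≤ ((⊤ : ℕ∞) : WithTop ℕ∞)))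
  have e1 : HasFDerivAt (fun q : ℝ × ℝ => _root_.pv f q.1 q.2)
      ((fderiv ℝ (fderiv ℝ (fun p : ℝ × ℝ => f p.1 p.2)) p).flip (0, 1)) p := by
    have := hd.clm_apply (hasFDerivAt_const ((0 : ℝ), (1 : ℝ)) p)
    refine (this.congr_of_eventuallyEq ?_).congr_fderiv (by ext <;> simp)
    filter_upwards [hS.mem_nhds hp] with q hq using h.pv_eq hS hq
  have e2 : HasFDerivAt (fun q : ℝ × ℝ => _root_.pu f q.1 q.2)
      ((fderiv ℝ (fderiv ℝ (fun p : ℝ × ℝ => f p.1 p.2)) p).flip (1, 0)) p := by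
    have := hd.clm_apply (hasFDerivAt_const ((1 : ℝ), (0 : ℝ)) p)
    refine (this.congr_of_eventuallyEq ?_).congr_fderiv (by ext <;> simp)
    filter_upwards [hS.mem_nhds hp] with q hq using h.pu_eq hS hq
  rw [(h.pv hS).pu_eq hS hp, (h.pu hS).pv_eq hS hp, e1.fderiv, e2.fderiv]
  exact hsym.eq _ _

theorem Sm.const {S : Set (ℝ × ℝ)} (hS : IsOpen S) (hSc : IsConnected S) {f : ℝ → ℝ → E}
    (h : Sm S f) (hu : ∀ p ∈ S, _root_.pu f p.1 p.2 = 0) (hv : ∀ p ∈ S, _root_.pv f p.1 p.2 = 0)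
    {p q : ℝ × ℝ} (hp : p ∈ S) (hq : q ∈ S) : f p.1 p.2 = f q.1 q.2 := by
  refine hS.is_const_of_fderiv_eq_zero (𝕜 := ℝ) (f := fun p : ℝ × ℝ => f p.1 p.2)
    hSc.isPreconnected (fun x hx => (h.fd hS hx).differentiableAt.differentiableWithinAt) ?_ hp hq
  intro x hx
  have h1 := hu x hx
  have h2 := hv x hx
  rw [h.pu_eq hS hx] at h1
  rw [h.pv_eq hS hx] at h2
  ext <;> simp [h1, h2]

theorem comb_zero {P Q R : E} {a b c : ℝ} (ha : a = 0) (hb : b = 0) (hc : c = 0) :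
    a • P + b • Q + c • R = 0 := by simp [ha, hb, hc]

/-- Smoothness of a combination of three fields. -/
theorem Sm.comb {S : Set (ℝ × ℝ)} {a b c : ℝ → ℝ → ℝ} {P Q R : ℝ → ℝ → E}
    (ha : Sm S a) (hb : Sm S b) (hc : Sm S c) (hP : Sm S P) (hQ : Sm S Q) (hR : Sm S R) :
    Sm S (fun u v => a u v • P u v + b u v • Q u v + c u v • R u v) :=
  ((ContDiffOn.smul ha hP).add (ContDiffOn.smul hb hQ)).add (ContDiffOn.smul hc hR)

theorem Sm.fst {F : Type*} [NormedAddCommGroup F] [NormedSpace ℝ F] {S : Set (ℝ × ℝ)}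
    {f : ℝ → ℝ → E × F} (h : Sm S f) : Sm S (fun u v => (f u v).1) :=
  ContDiffOn.fst h

theorem Sm.snd {F : Type*} [NormedAddCommGroup F] [NormedSpace ℝ F] {S : Set (ℝ × ℝ)}
    {f : ℝ → ℝ → E × F} (h : Sm S f) : Sm S (fun u v => (f u v).2) :=
  ContDiffOn.snd h

end helpers

theorem Sm.lcross {S : Set (ℝ × ℝ)} {f g : ℝ → ℝ → ℝ × ℝ × ℝ} (hf : Sm S f) (hg : Sm S g) :
    Sm S (fun u v => lcross (f u v) (g u v)) := by
  have f1 := ContDiffOn.fst hf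
  have f2 := ContDiffOn.fst (ContDiffOn.snd hf)
  have f3 := ContDiffOn.snd (ContDiffOn.snd hf)
  have g1 := ContDiffOn.fst hg
  have g2 := ContDiffOn.fst (ContDiffOn.snd hg)
  have g3 := ContDiffOn.snd (ContDiffOn.snd hg)
  exact ((f2.mul g3).sub (f3.mul g2)).prodMk
    (((f3.mul g1).sub (f1.mul g3)).prodMk ((f1.mul g2).sub (f2.mul g1)).neg)

theorem HasDerivAt.mink {f g : ℝ → ℝ × ℝ × ℝ} {f' g' : ℝ × ℝ × ℝ} {t : ℝ}
    (hf : HasDerivAt f f' t) (hg : HasDerivAt g g' t) :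
    HasDerivAt (fun s => mink (f s) (g s)) (mink f' (g t) + mink (f t) g') t := by
  have f1 : HasDerivAt (fun s => (f s).1) f'.1 t :=
    (ContinuousLinearMap.fst ℝ ℝ (ℝ × ℝ)).hasFDerivAt.comp_hasDerivAt t hf
  have f2 : HasDerivAt (fun s => (f s).2.1) f'.2.1 t :=
    ((ContinuousLinearMap.fst ℝ ℝ ℝ).comp (ContinuousLinearMap.snd ℝ ℝ (ℝ × ℝ))).hasFDerivAt.comp_hasDerivAt t hf
  have f3 : HasDerivAt (fun s => (f s).2.2) f'.2.2 t :=
    ((ContinuousLinearMap.snd ℝ ℝ ℝ).comp (ContinuousLinearMap.snd ℝ ℝ (ℝ × ℝ))).hasFDerivAt.comp_hasDerivAt t hf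
  have g1 : HasDerivAt (fun s => (g s).1) g'.1 t :=
    (ContinuousLinearMap.fst ℝ ℝ (ℝ × ℝ)).hasFDerivAt.comp_hasDerivAt t hg
  have g2 : HasDerivAt (fun s => (g s).2.1) g'.2.1 t :=
    ((ContinuousLinearMap.fst ℝ ℝ ℝ).comp (ContinuousLinearMap.snd ℝ ℝ (ℝ × ℝ))).hasFDerivAt.comp_hasDerivAt t hg
  have g3 : HasDerivAt (fun s => (g s).2.2) g'.2.2 t :=
    ((ContinuousLinearMap.snd ℝ ℝ ℝ).comp (ContinuousLinearMap.snd ℝ ℝ (ℝ × ℝ))).hasFDerivAt.comp_hasDerivAt t hg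
  refine (((f1.mul g1).add (f2.mul g2)).sub (f3.mul g3)).congr_deriv ?_
  simp only [_root_.mink]; ring

theorem mink_zero_right (x : ℝ × ℝ × ℝ) : mink x 0 = 0 := by simp [mink]

/-- For a maximal surface with planar curvature lines, the axial
direction fields v₁ and v₂ are constant on Σ, are Minkowski-orthogonal to m = ρ⁻²(X_u × X_uu)
and m_v (resp. n = ρ⁻²(X_v × X_vv) and n_u), and are nonzero whenever ρ_u (resp. ρ_v) is
somewhere nonzero. -/
theorem axial_directions_exist
    (S : Set (ℝ × ℝ)) (hS : IsOpen S) (hSc : IsConnected S)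
    (ρ : ℝ → ℝ → ℝ) (X N : ℝ → ℝ → ℝ × ℝ × ℝ)
    (hρ : ContDiffOn ℝ (⊤ : ℕ∞) (fun p : ℝ × ℝ => ρ p.1 p.2) S)
    (hρpos : ∀ p ∈ S, 0 < ρ p.1 p.2)
    (hX : ContDiffOn ℝ (⊤ : ℕ∞) (fun p : ℝ × ℝ => X p.1 p.2) S)
    (hN : ContDiffOn ℝ (⊤ : ℕ∞) (fun p : ℝ × ℝ => N p.1 p.2) S)
    (hGauss : ∀ p ∈ S,
      ρ p.1 p.2 * (pu (pu ρ) p.1 p.2 + pv (pv ρ) p.1 p.2)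
        - ((pu ρ p.1 p.2) ^ 2 + (pv ρ p.1 p.2) ^ 2) + 1 = 0)
    (hPlanar : ∀ p ∈ S, pv (pu ρ) p.1 p.2 = 0)
    (hGW1 : ∀ p ∈ S, pu (pu X) p.1 p.2 =
      (pu ρ p.1 p.2 / ρ p.1 p.2) • pu X p.1 p.2
        - (pv ρ p.1 p.2 / ρ p.1 p.2) • pv X p.1 p.2 + N p.1 p.2)
    (hGW2 : ∀ p ∈ S, pv (pv X) p.1 p.2 =
      -((pu ρ p.1 p.2 / ρ p.1 p.2) • pu X p.1 p.2)
        + (pv ρ p.1 p.2 / ρ p.1 p.2) • pv X p.1 p.2 - N p.1 p.2)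
    (hGW3 : ∀ p ∈ S, pv (pu X) p.1 p.2 =
      (pv ρ p.1 p.2 / ρ p.1 p.2) • pu X p.1 p.2
        + (pu ρ p.1 p.2 / ρ p.1 p.2) • pv X p.1 p.2)
    (hGW4 : ∀ p ∈ S, pu N p.1 p.2 = ((ρ p.1 p.2) ^ 2)⁻¹ • pu X p.1 p.2)
    (hGW5 : ∀ p ∈ S, pv N p.1 p.2 = -(((ρ p.1 p.2) ^ 2)⁻¹ • pv X p.1 p.2))
    (hfr1 : ∀ p ∈ S, mink (pu X p.1 p.2) (pu X p.1 p.2) = (ρ p.1 p.2) ^ 2)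
    (hfr2 : ∀ p ∈ S, mink (pv X p.1 p.2) (pv X p.1 p.2) = (ρ p.1 p.2) ^ 2)
    (hfr3 : ∀ p ∈ S, mink (pu X p.1 p.2) (pv X p.1 p.2) = 0)
    (hfr4 : ∀ p ∈ S, mink (pu X p.1 p.2) (N p.1 p.2) = 0)
    (hfr5 : ∀ p ∈ S, mink (pv X p.1 p.2) (N p.1 p.2) = 0)
    (hfr6 : ∀ p ∈ S, mink (N p.1 p.2) (N p.1 p.2) = -1)
    (V1 V2 m n : ℝ → ℝ → ℝ × ℝ × ℝ)
    (hV1 : ∀ p ∈ S, V1 p.1 p.2 =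
      ((((pu ρ p.1 p.2) ^ 2 - ρ p.1 p.2 * pu (pu ρ) p.1 p.2) / (ρ p.1 p.2) ^ 2) • pu X p.1 p.2
        - ((pu ρ p.1 p.2 * pv ρ p.1 p.2) / (ρ p.1 p.2) ^ 2) • pv X p.1 p.2
        + (pu ρ p.1 p.2 / ρ p.1 p.2) • N p.1 p.2))
    (hV2 : ∀ p ∈ S, V2 p.1 p.2 =
      (-(((pu ρ p.1 p.2 * pv ρ p.1 p.2) / (ρ p.1 p.2) ^ 2) • pu X p.1 p.2)
        + (((pv ρ p.1 p.2) ^ 2 - ρ p.1 p.2 * pv (pv ρ) p.1 p.2) / (ρ p.1 p.2) ^ 2) • pv X p.1 p.2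
        - (pv ρ p.1 p.2 / ρ p.1 p.2) • N p.1 p.2))
    (hm : ∀ p ∈ S, m p.1 p.2 =
      ((ρ p.1 p.2) ^ 2)⁻¹ • lcross (pu X p.1 p.2) (pu (pu X) p.1 p.2))
    (hn : ∀ p ∈ S, n p.1 p.2 =
      ((ρ p.1 p.2) ^ 2)⁻¹ • lcross (pv X p.1 p.2) (pv (pv X) p.1 p.2)) :
    (∀ p ∈ S, pu V1 p.1 p.2 = 0 ∧ pv V1 p.1 p.2 = 0
      ∧ pu V2 p.1 p.2 = 0 ∧ pv V2 p.1 p.2 = 0) ∧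
    (∀ p ∈ S, mink (m p.1 p.2) (V1 p.1 p.2) = 0 ∧ mink (pv m p.1 p.2) (V1 p.1 p.2) = 0
      ∧ mink (n p.1 p.2) (V2 p.1 p.2) = 0 ∧ mink (pu n p.1 p.2) (V2 p.1 p.2) = 0) ∧
    ((∃ p ∈ S, pu ρ p.1 p.2 ≠ 0) → ∀ q ∈ S, V1 q.1 q.2 ≠ 0) ∧
    ((∃ p ∈ S, pv ρ p.1 p.2 ≠ 0) → ∀ q ∈ S, V2 q.1 q.2 ≠ 0) := by
  have Sρ : Sm S ρ := hρ
  have SX : Sm S X := hX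
  have SN : Sm S N := hN
  have Sa := Sρ.pu hS
  have Sb := Sρ.pv hS
  have SA := Sa.pu hS
  have SB := Sb.pv hS
  have SP := SX.pu hS
  have SQ := SX.pv hS
  have hne : ∀ p ∈ S, ρ p.1 p.2 ≠ 0 := fun p hp => (hρpos p hp).ne'
  have hba : ∀ p ∈ S, pu (pv ρ) p.1 p.2 = 0 := fun p hp => by
    rw [Sρ.comm hS hp, hPlanar p hp]
  have hAv : ∀ p ∈ S, pv (pu (pu ρ)) p.1 p.2 = 0 := fun p hp => by
    rw [← Sa.comm hS hp]
    refine (pu_congr hS (g := fun _ _ => (0 : ℝ)) hPlanar hp).trans ?_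
    simp [pu]
  have hBu : ∀ p ∈ S, pu (pv (pv ρ)) p.1 p.2 = 0 := fun p hp => by
    rw [Sb.comm hS hp]
    refine (pv_congr hS (g := fun _ _ => (0 : ℝ)) hba hp).trans ?_
    simp [pv]
  have hQu : ∀ p ∈ S, pu (pv X) p.1 p.2 = (pv ρ p.1 p.2 / ρ p.1 p.2) • pu X p.1 p.2
        + (pu ρ p.1 p.2 / ρ p.1 p.2) • pv X p.1 p.2 := fun p hp => by
    rw [SX.comm hS hp, hGW3 p hp]
  -- differentiated Gauss equation
  have hAu : ∀ p ∈ S, ρ p.1 p.2 * pu (pu (pu ρ)) p.1 p.2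
      = pu ρ p.1 p.2 * (pu (pu ρ) p.1 p.2 - pv (pv ρ) p.1 p.2) := fun p hp => by
    have h1 := (((Sρ.du hS hp).mul ((SA.du hS hp).add (SB.du hS hp))).sub
      (((Sa.du hS hp).pow 2).add ((Sb.du hS hp).pow 2))).add_const 1
    have h2 := h1.congr_of_eventuallyEq (f₁ := fun _ => (0 : ℝ)) (by
      filter_upwards [nhd_u hS hp] with x hx using (hGauss _ hx).symm)
    have h3 := h2.unique (hasDerivAt_const _ _)
    simp only [hba p hp, hBu p hp, Pi.add_apply] at h3
    push_cast at h3
    linear_combination h3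
  have hBv : ∀ p ∈ S, ρ p.1 p.2 * pv (pv (pv ρ)) p.1 p.2
      = pv ρ p.1 p.2 * (pv (pv ρ) p.1 p.2 - pu (pu ρ) p.1 p.2) := fun p hp => by
    have h1 := (((Sρ.dv hS hp).mul ((SA.dv hS hp).add (SB.dv hS hp))).sub
      (((Sa.dv hS hp).pow 2).add ((Sb.dv hS hp).pow 2))).add_const 1
    have h2 := h1.congr_of_eventuallyEq (f₁ := fun _ => (0 : ℝ)) (by
      filter_upwards [nhd_v hS hp] with x hx using (hGauss _ hx).symm)
    have h3 := h2.unique (hasDerivAt_const _ _)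
    simp only [hPlanar p hp, hAv p hp, Pi.add_apply] at h3
    push_cast at h3
    linear_combination h3
  -- smoothness of the fields
  have hne2 : ∀ p ∈ S, (ρ p.1 p.2) ^ 2 ≠ 0 := fun p hp => pow_ne_zero 2 (hne p hp)
  have SV1 : Sm S V1 := by
    refine ContDiffOn.congr ?_ hV1
    exact (((((ContDiffOn.pow Sa 2).sub (ContDiffOn.mul Sρ SA)).div (ContDiffOn.pow Sρ 2)
      hne2).smul SP).sub (((ContDiffOn.mul Sa Sb).div (ContDiffOn.pow Sρ 2) hne2).smul SQ)).add
      ((ContDiffOn.div Sa Sρ hne).smul SN)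
  have SV2 : Sm S V2 := by
    refine ContDiffOn.congr ?_ hV2
    exact ((((ContDiffOn.mul Sa Sb).div (ContDiffOn.pow Sρ 2) hne2).smul SP).neg.add
      ((((ContDiffOn.pow Sb 2).sub (ContDiffOn.mul Sρ SB)).div (ContDiffOn.pow Sρ 2)
      hne2).smul SQ)).sub ((ContDiffOn.div Sb Sρ hne).smul SN)
  have Sm' : Sm S m := by
    refine ContDiffOn.congr ?_ hm
    exact ((ContDiffOn.pow Sρ 2).inv hne2).smul (SP.lcross (SP.pu hS))
  have Sn' : Sm S n := by
    refine ContDiffOn.congr ?_ hn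
    exact ((ContDiffOn.pow Sρ 2).inv hne2).smul (SQ.lcross (SQ.pv hS))
  have V1u : ∀ p ∈ S, pu V1 p.1 p.2 = 0 := fun p hp => by
    have r := Sρ.du hS hp
    have a := Sa.du hS hp
    have b := Sb.du hS hp
    have h1 := (((((a.pow 2).sub (r.mul (SA.du hS hp))).div (r.pow 2) (hne2 p hp)).smul
      (SP.du hS hp)).sub (((a.mul b).div (r.pow 2) (hne2 p hp)).smul (SQ.du hS hp))).add
      ((a.div r (hne p hp)).smul (SN.du hS hp))
    refine (h1.congr_of_eventuallyEq (f₁ := fun x => V1 x p.2) (by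
      filter_upwards [nhd_u hS hp] with x hx using hV1 _ hx)).deriv.trans ?_
    have e0 := hne p hp
    have e1 := hAu p hp
    have e2 := hGauss p hp
    simp only [hba p hp, hQu p hp, hGW1 p hp, hGW4 p hp, Pi.add_apply, Pi.mul_apply,
      Pi.sub_apply, Pi.pow_apply, Pi.div_apply]
    generalize pu (pu (pu ρ)) p.1 p.2 = Au at *
    generalize pu (pu ρ) p.1 p.2 = A at *
    generalize pv (pv ρ) p.1 p.2 = B at *
    generalize pu ρ p.1 p.2 = a at *
    generalize pv ρ p.1 p.2 = b at *
    generalize ρ p.1 p.2 = r at *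
    match_scalars
    · field_simp
      linear_combination (-r ^ 2) * e1 + a * r * e2
    · field_simp
      ring
    · field_simp
      ring
  have V1v : ∀ p ∈ S, pv V1 p.1 p.2 = 0 := fun p hp => by
    have r := Sρ.dv hS hp
    have a := Sa.dv hS hp
    have b := Sb.dv hS hp
    have h1 := (((((a.pow 2).sub (r.mul (SA.dv hS hp))).div (r.pow 2) (hne2 p hp)).smul
      (SP.dv hS hp)).sub (((a.mul b).div (r.pow 2) (hne2 p hp)).smul (SQ.dv hS hp))).add
      ((a.div r (hne p hp)).smul (SN.dv hS hp))
    refine (h1.congr_of_eventuallyEq (f₁ := fun y => V1 p.1 y) (by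
      filter_upwards [nhd_v hS hp] with x hx using hV1 _ hx)).deriv.trans ?_
    have e0 := hne p hp
    have e2 := hGauss p hp
    simp only [hPlanar p hp, hAv p hp, hGW2 p hp, hGW3 p hp, hGW5 p hp, Pi.add_apply, Pi.mul_apply,
      Pi.sub_apply, Pi.pow_apply, Pi.div_apply]
    generalize pu (pu ρ) p.1 p.2 = A at *
    generalize pv (pv ρ) p.1 p.2 = B at *
    generalize pu ρ p.1 p.2 = a at *
    generalize pv ρ p.1 p.2 = b at *
    generalize ρ p.1 p.2 = r at *
    match_scalars
    · field_simp
      ring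
    · field_simp
      linear_combination (- a * r) * e2
    · field_simp
      ring
  have V2u : ∀ p ∈ S, pu V2 p.1 p.2 = 0 := fun p hp => by
    have r := Sρ.du hS hp
    have a := Sa.du hS hp
    have b := Sb.du hS hp
    have h1 := (((((a.mul b).div (r.pow 2) (hne2 p hp)).smul (SP.du hS hp)).neg).add
      ((((b.pow 2).sub (r.mul (SB.du hS hp))).div (r.pow 2) (hne2 p hp)).smul
      (SQ.du hS hp))).sub ((b.div r (hne p hp)).smul (SN.du hS hp))
    refine (h1.congr_of_eventuallyEq (f₁ := fun x => V2 x p.2) (by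
      filter_upwards [nhd_u hS hp] with x hx using hV2 _ hx)).deriv.trans ?_
    have e0 := hne p hp
    have e2 := hGauss p hp
    simp only [hba p hp, hBu p hp, hQu p hp, hGW1 p hp, hGW4 p hp, Pi.add_apply, Pi.mul_apply,
      Pi.sub_apply, Pi.pow_apply, Pi.div_apply]
    generalize pu (pu ρ) p.1 p.2 = A at *
    generalize pv (pv ρ) p.1 p.2 = B at *
    generalize pu ρ p.1 p.2 = a at *
    generalize pv ρ p.1 p.2 = b at *
    generalize ρ p.1 p.2 = r at *
    match_scalars
    · field_simp
      linear_combination (- b * r) * e2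
    · field_simp
      ring
    · field_simp
      ring
  have V2v : ∀ p ∈ S, pv V2 p.1 p.2 = 0 := fun p hp => by
    have r := Sρ.dv hS hp
    have a := Sa.dv hS hp
    have b := Sb.dv hS hp
    have h1 := (((((a.mul b).div (r.pow 2) (hne2 p hp)).smul (SP.dv hS hp)).neg).add
      ((((b.pow 2).sub (r.mul (SB.dv hS hp))).div (r.pow 2) (hne2 p hp)).smul
      (SQ.dv hS hp))).sub ((b.div r (hne p hp)).smul (SN.dv hS hp))
    refine (h1.congr_of_eventuallyEq (f₁ := fun y => V2 p.1 y) (by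
      filter_upwards [nhd_v hS hp] with x hx using hV2 _ hx)).deriv.trans ?_
    have e0 := hne p hp
    have e1 := hBv p hp
    have e2 := hGauss p hp
    simp only [hPlanar p hp, hGW2 p hp, hGW3 p hp, hGW5 p hp, Pi.add_apply, Pi.mul_apply,
      Pi.sub_apply, Pi.pow_apply, Pi.div_apply]
    generalize pv (pv (pv ρ)) p.1 p.2 = Bv at *
    generalize pu (pu ρ) p.1 p.2 = A at *
    generalize pv (pv ρ) p.1 p.2 = B at *
    generalize pu ρ p.1 p.2 = a at *
    generalize pv ρ p.1 p.2 = b at *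
    generalize ρ p.1 p.2 = r at *
    match_scalars
    · field_simp
      ring
    · field_simp
      linear_combination (-r ^ 2) * e1 + b * r * e2
    · field_simp
      ring
  have mV1 : ∀ p ∈ S, mink (m p.1 p.2) (V1 p.1 p.2) = 0 := fun p hp => by
    have e0 := hne p hp
    rw [hm p hp, hV1 p hp, hGW1 p hp]
    simp only [mink, lcross, Prod.smul_fst, Prod.smul_snd, Prod.fst_add, Prod.snd_add,
      Prod.fst_sub, Prod.snd_sub, smul_eq_mul]
    field_simp
    ring
  have nV2 : ∀ p ∈ S, mink (n p.1 p.2) (V2 p.1 p.2) = 0 := fun p hp => by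
    have e0 := hne p hp
    rw [hn p hp, hV2 p hp, hGW2 p hp]
    simp only [mink, lcross, Prod.smul_fst, Prod.smul_snd, Prod.fst_add, Prod.snd_add,
      Prod.fst_sub, Prod.snd_sub, Prod.fst_neg, Prod.snd_neg, smul_eq_mul]
    field_simp
    ring
  refine ⟨fun p hp => ⟨V1u p hp, V1v p hp, V2u p hp, V2v p hp⟩,
    fun p hp => ⟨mV1 p hp, ?_, nV2 p hp, ?_⟩, ?_, ?_⟩
  · have h1 := (Sm'.dv hS hp).mink (SV1.dv hS hp)
    have h2 := h1.congr_of_eventuallyEq (f₁ := fun _ => (0 : ℝ)) (by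
      filter_upwards [nhd_v hS hp] with x hx using (mV1 _ hx).symm)
    have h3 := h2.unique (hasDerivAt_const _ _)
    rwa [V1v p hp, mink_zero_right, add_zero] at h3
  · have h1 := (Sn'.du hS hp).mink (SV2.du hS hp)
    have h2 := h1.congr_of_eventuallyEq (f₁ := fun _ => (0 : ℝ)) (by
      filter_upwards [nhd_u hS hp] with x hx using (nV2 _ hx).symm)
    have h3 := h2.unique (hasDerivAt_const _ _)
    rwa [V2u p hp, mink_zero_right, add_zero] at h3
  · rintro ⟨p, hp, hpa⟩ q hq h0
    have h1 := (SV1.const hS hSc V1u V1v hp hq).trans h0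
    have e4 := hfr4 p hp
    have e5 := hfr5 p hp
    have e6 := hfr6 p hp
    have h2 : mink (V1 p.1 p.2) (N p.1 p.2) = -(pu ρ p.1 p.2 / ρ p.1 p.2) := by
      rw [hV1 p hp]
      simp only [mink, Prod.smul_fst, Prod.smul_snd, Prod.fst_add, Prod.snd_add,
        Prod.fst_sub, Prod.snd_sub, smul_eq_mul] at e4 e5 e6 ⊢
      linear_combination (((pu ρ p.1 p.2) ^ 2 - ρ p.1 p.2 * pu (pu ρ) p.1 p.2) / (ρ p.1 p.2) ^ 2)
        * e4 - ((pu ρ p.1 p.2 * pv ρ p.1 p.2) / (ρ p.1 p.2) ^ 2) * e5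
        + (pu ρ p.1 p.2 / ρ p.1 p.2) * e6
    rw [h1] at h2
    have h3 : pu ρ p.1 p.2 / ρ p.1 p.2 = 0 := by
      simpa [mink] using h2.symm
    exact div_ne_zero hpa (hne p hp) h3
  · rintro ⟨p, hp, hpa⟩ q hq h0
    have h1 := (SV2.const hS hSc V2u V2v hp hq).trans h0
    have e4 := hfr4 p hp
    have e5 := hfr5 p hp
    have e6 := hfr6 p hp
    have h2 : mink (V2 p.1 p.2) (N p.1 p.2) = pv ρ p.1 p.2 / ρ p.1 p.2 := by
      rw [hV2 p hp]
      simp only [mink, Prod.smul_fst, Prod.smul_snd, Prod.fst_add, Prod.snd_add,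
        Prod.fst_sub, Prod.snd_sub, Prod.fst_neg, Prod.snd_neg, smul_eq_mul] at e4 e5 e6 ⊢
      linear_combination (((pv ρ p.1 p.2) ^ 2 - ρ p.1 p.2 * pv (pv ρ) p.1 p.2) / (ρ p.1 p.2) ^ 2)
        * e5 - ((pu ρ p.1 p.2 * pv ρ p.1 p.2) / (ρ p.1 p.2) ^ 2) * e4
        - (pv ρ p.1 p.2 / ρ p.1 p.2) * e6
    rw [h1] at h2
    have h3 : pv ρ p.1 p.2 / ρ p.1 p.2 = 0 := by
      simpa [mink] using h2.symm
    exact div_ne_zero hpa (hne p hp) h3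
end
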